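/- Let n ≥ 1. There exists a constant C′ > 0 depending only on n with the following property: for every T > 0, every smooth positive function u : ℝⁿ × (0,T] → (0,∞) satisfying the heat equation ∂u/∂t = Δu, every β > 1, all x₁, x₂ ∈ ℝⁿ and all 0 < t₁ < t₂ ≤ T, one has u(x₂,t₂) ≥ u(x₁,t₁) · (t₂/t₁)^{−C′β} · exp( −β·‖x₂ − x₁‖² / (4(t₂ − t₁)) ). -/

import Mathlib

/-- The Euclidean Laplacian of `f : ℝⁿ → ℝ` at `x`: the trace of the Hessian,
computed as the sum of the second partial derivatives in the coordinate directions. -/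
noncomputable def laplacian {n : ℕ} (f : EuclideanSpace ℝ (Fin n) → ℝ)
    (x : EuclideanSpace ℝ (Fin n)) : ℝ :=
  ∑ i, fderiv ℝ (fun y => fderiv ℝ f y (EuclideanSpace.single i 1)) x
    (EuclideanSpace.single i 1)

open scoped ContDiff

noncomputable def DD {P : Type*} [NormedAddCommGroup P] [NormedSpace ℝ P] (v : P) (g : P → ℝ) : P → ℝ :=
  fun p => fderiv ℝ g p v

section
variable {P : Type*} [NormedAddCommGroup P] [NormedSpace ℝ P] {U : Set P} {g h : P → ℝ}

lemma DD_smooth (hU : IsOpen U) (hg : ContDiffOn ℝ ∞ g U) (v : P) : ContDiffOn ℝ ∞ (DD v g) U := by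
  have h1 : ContDiffOn ℝ ∞ (fderiv ℝ g) U := hg.fderiv_of_isOpen hU (by simp)
  exact h1.clm_apply contDiffOn_const

lemma sm_diff (hU : IsOpen U) (hg : ContDiffOn ℝ ∞ g U) {p : P} (hp : p ∈ U) : DifferentiableAt ℝ g p :=
  (hg.contDiffAt (hU.mem_nhds hp)).differentiableAt (by simp)

lemma DD_comm (hU : IsOpen U) (hg : ContDiffOn ℝ ∞ g U) (v w : P) {p : P} (hp : p ∈ U) :
    DD v (DD w g) p = DD w (DD v g) p := by
  have hc := hg.contDiffAt (hU.mem_nhds hp)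
  have hs : IsSymmSndFDerivAt ℝ g p := hc.isSymmSndFDerivAt (by simp; exact WithTop.coe_le_coe.2 (le_top : (2 : ℕ∞) ≤ ⊤))
  have h1 : ContDiffOn ℝ ∞ (fderiv ℝ g) U := hg.fderiv_of_isOpen hU (by simp)
  have h2 : DifferentiableAt ℝ (fderiv ℝ g) p :=
    (h1.contDiffAt (hU.mem_nhds hp)).differentiableAt (by simp)
  have key : ∀ a b : P, DD a (DD b g) p = fderiv ℝ (fderiv ℝ g) p a b := by
    intro a b
    unfold DD
    rw [fderiv_clm_apply h2 (differentiableAt_const b)]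
    simp
  rw [key, key]
  exact hs.eq v w

lemma DD_congr (hU : IsOpen U) (hgh : ∀ p ∈ U, g p = h p) (v : P) {p : P} (hp : p ∈ U) :
    DD v g p = DD v h p := by
  unfold DD
  have : g =ᶠ[nhds p] h := Filter.eventually_of_mem (hU.mem_nhds hp) hgh
  rw [this.fderiv_eq]

lemma DD_add (hg : DifferentiableAt ℝ g p) (hh : DifferentiableAt ℝ h p) (v : P) :
    DD v (fun q => g q + h q) p = DD v g p + DD v h p := by
  unfold DD; rw [fderiv_fun_add hg hh]; rfl

lemma DD_sub (hg : DifferentiableAt ℝ g p) (hh : DifferentiableAt ℝ h p) (v : P) :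
    DD v (fun q => g q - h q) p = DD v g p - DD v h p := by
  unfold DD; rw [fderiv_fun_sub hg hh]; rfl

lemma DD_mul (hg : DifferentiableAt ℝ g p) (hh : DifferentiableAt ℝ h p) (v : P) :
    DD v (fun q => g q * h q) p = DD v g p * h p + g p * DD v h p := by
  unfold DD; rw [fderiv_fun_mul hg hh]; simp; ring

lemma DD_sq (hg : DifferentiableAt ℝ g p) (v : P) :
    DD v (fun q => g q ^ 2) p = 2 * g p * DD v g p := by
  have : (fun q => g q ^ 2) = fun q => g q * g q := by ext; ring
  rw [this, DD_mul hg hg]; ring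

lemma DD_cmul (hg : DifferentiableAt ℝ g p) (c : ℝ) (v : P) :
    DD v (fun q => c * g q) p = c * DD v g p := by
  unfold DD; rw [fderiv_const_mul hg]; rfl

lemma DD_sum {ι : Type*} [Fintype ι] {g : ι → P → ℝ} (hg : ∀ i, DifferentiableAt ℝ (g i) p) (v : P) :
    DD v (fun q => ∑ i, g i q) p = ∑ i, DD v (g i) p := by
  unfold DD; rw [fderiv_fun_sum (fun i _ => hg i)]; simp

lemma DD_line (hg : DifferentiableAt ℝ g p) (v : P) (s : ℝ) {q : P} (hq : p = q + s • v) :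
    HasDerivAt (fun s : ℝ => g (q + s • v)) (DD v g p) s := by
  subst hq
  have h1 : HasDerivAt (fun s : ℝ => q + s • v) v s := by
    simpa using ((hasDerivAt_id s).smul_const v).const_add q
  exact hg.hasFDerivAt.comp_hasDerivAt s h1

lemma snd_test {k : ℝ → ℝ} (hc : ContinuousAt k 0) (hm : IsLocalMax k 0) : deriv (deriv k) 0 ≤ 0 := by
  by_contra hcon
  push Not at hcon
  have hd : deriv k 0 = 0 := hm.deriv_eq_zero
  have hmin := isLocalMin_of_deriv_deriv_pos hcon hd hc
  have heq : k =ᶠ[nhds 0] fun _ => k 0 := by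
    filter_upwards [hm, hmin] with x h1 h2
    exact le_antisymm h1 h2
  have := heq.deriv.deriv_eq
  simp at this
  linarith

lemma max_first (hU : IsOpen U) (hg : ContDiffOn ℝ ∞ g U) {p : P} (hp : p ∈ U) (v : P)
    (hm : IsLocalMax (fun s : ℝ => g (p + s • v)) 0) :
    DD v g p = 0 ∧ DD v (DD v g) p ≤ 0 := by
  have hcont : Continuous (fun s : ℝ => p + s • v) := by fun_prop
  have hev : ∀ᶠ s : ℝ in nhds 0, p + s • v ∈ U :=
    hcont.continuousAt.eventually_mem (hU.mem_nhds (by simpa using hp))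
  have hder : ∀ s : ℝ, p + s • v ∈ U →
      HasDerivAt (fun s : ℝ => g (p + s • v)) (DD v g (p + s • v)) s := fun s hs =>
    DD_line (sm_diff hU hg hs) v s rfl
  have h0 := hder 0 (by simpa using hp)
  constructor
  · have := hm.hasDerivAt_eq_zero h0
    simpa using this
  · have h1 := snd_test h0.continuousAt hm
    have h2 : deriv (fun s : ℝ => g (p + s • v)) =ᶠ[nhds 0] fun s => DD v g (p + s • v) := by
      filter_upwards [hev] with s hs
      exact (hder s hs).deriv
    rw [h2.deriv_eq] at h1
    have h3 : HasDerivAt (fun s : ℝ => DD v g (p + s • v)) (DD v (DD v g) p) 0 :=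
      DD_line (sm_diff hU (DD_smooth hU hg v) hp) v 0 (by simp)
    rwa [h3.deriv] at h1

end

section
variable {P : Type*} [NormedAddCommGroup P] [NormedSpace ℝ P] {U : Set P}
  {ι : Type*} [Fintype ι]

lemma DD3 (hU : IsOpen U) {f : P → ℝ} (hf : ContDiffOn ℝ ∞ f U) (v w : P) {p : P} (hp : p ∈ U) :
    DD v (DD w (DD w f)) p = DD w (DD w (DD v f)) p := by
  rw [DD_comm hU (DD_smooth hU hf w) v w hp]
  exact DD_congr hU (fun q hq => DD_comm hU hf v w hq) w hp

noncomputable def LYF (e : ι → P) (et : P) (f : P → ℝ) (β : ℝ) : P → ℝ :=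
  fun p => ∑ i, (DD (e i) f p) ^ 2 - β * DD et f p

lemma LYF_smooth (hU : IsOpen U) {f : P → ℝ} (hf : ContDiffOn ℝ ∞ f U) (e : ι → P) (et : P) (β : ℝ) :
    ContDiffOn ℝ ∞ (LYF e et f β) U := by
  unfold LYF
  refine ContDiffOn.sub (ContDiffOn.sum fun i _ => (DD_smooth hU hf _).pow 2) ?_
  exact contDiffOn_const.mul (DD_smooth hU hf _)

lemma bochner (hU : IsOpen U) {f : P → ℝ} (hf : ContDiffOn ℝ ∞ f U) (e : ι → P) (et : P) (β : ℝ)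
    (heat : ∀ p ∈ U, DD et f p = ∑ i, (DD (e i) (DD (e i) f) p + (DD (e i) f p) ^ 2))
    {p : P} (hp : p ∈ U) :
    ∑ i, DD (e i) (DD (e i) (LYF e et f β)) p - DD et (LYF e et f β) p
      = 2 * ∑ i, ∑ j, (DD (e i) (DD (e j) f) p) ^ 2
        - 2 * ∑ i, DD (e i) f p * DD (e i) (LYF e et f β) p := by
  have s1 : ∀ v, ContDiffOn ℝ ∞ (DD v f) U := fun v => DD_smooth hU hf v
  have s2 : ∀ v w, ContDiffOn ℝ ∞ (DD v (DD w f)) U := fun v w => DD_smooth hU (s1 w) v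
  have d1 : ∀ v, ∀ q ∈ U, DifferentiableAt ℝ (DD v f) q := fun v q hq => sm_diff hU (s1 v) hq
  have d2 : ∀ v w, ∀ q ∈ U, DifferentiableAt ℝ (DD v (DD w f)) q :=
    fun v w q hq => sm_diff hU (s2 v w) hq
  have h1 : ∀ v, ∀ q ∈ U, DD v (LYF e et f β) q
      = ∑ j, 2 * DD (e j) f q * DD v (DD (e j) f) q - β * DD v (DD et f) q := by
    intro v q hq
    unfold LYF
    rw [DD_sub, DD_cmul (d1 _ q hq), DD_sum]
    · congr 1
      exact Finset.sum_congr rfl fun j _ => DD_sq (d1 _ q hq) v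
    · intro i; exact (d1 _ q hq).pow 2
    · exact DifferentiableAt.fun_sum fun i _ => (d1 _ q hq).pow 2
    · exact (d1 _ q hq).const_mul β
  have h2 : ∀ v, DD v (DD v (LYF e et f β)) p
      = ∑ j, (2 * (DD v (DD (e j) f) p) ^ 2 + 2 * DD (e j) f p * DD v (DD v (DD (e j) f)) p)
        - β * DD v (DD v (DD et f)) p := by
    intro v
    rw [DD_congr hU (h1 v) v hp, DD_sub, DD_cmul (d2 _ _ p hp), DD_sum]
    · congr 1
      refine Finset.sum_congr rfl fun j _ => ?_
      rw [DD_mul ((d1 _ p hp).const_mul 2) (d2 _ _ p hp), DD_cmul (d1 _ p hp)]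
      ring
    · intro i; exact ((d1 _ p hp).const_mul 2).mul (d2 _ _ p hp)
    · exact DifferentiableAt.fun_sum fun i _ => ((d1 _ p hp).const_mul 2).mul (d2 _ _ p hp)
    · exact (d2 _ _ p hp).const_mul β
  have h4 : ∀ v, ∑ i, DD (e i) (DD (e i) (DD v f)) p
      = DD v (DD et f) p - ∑ i, 2 * DD (e i) f p * DD v (DD (e i) f) p := by
    intro v
    rw [DD_congr hU heat v hp, DD_sum, eq_sub_iff_add_eq, ← Finset.sum_add_distrib]
    · refine Finset.sum_congr rfl fun j _ => ?_
      rw [DD_add (h := fun q => DD (e j) f q ^ 2) (d2 _ _ p hp) ((d1 _ p hp).pow 2), DD_sq (d1 _ p hp), DD3 hU hf _ _ hp]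
    · intro i; exact (d2 _ _ p hp).add ((d1 _ p hp).pow 2)
  have h5 : ∑ i, DD (e i) (DD (e i) (LYF e et f β)) p
      = 2 * ∑ i, ∑ j, (DD (e i) (DD (e j) f) p) ^ 2
        + ∑ j, 2 * DD (e j) f p * ∑ i, DD (e i) (DD (e i) (DD (e j) f)) p
        - β * ∑ i, DD (e i) (DD (e i) (DD et f)) p := by
    simp_rw [h2, Finset.sum_sub_distrib, Finset.sum_add_distrib, Finset.mul_sum]
    congr 2
    exact Finset.sum_comm
  rw [h5]
  simp_rw [h4]
  rw [h1 et p hp]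
  have h6 : ∀ i, DD (e i) (LYF e et f β) p
      = ∑ j, 2 * DD (e j) f p * DD (e i) (DD (e j) f) p - β * DD et (DD (e i) f) p := by
    intro i; rw [h1 _ p hp, DD_comm hU hf _ et hp]
  simp_rw [h6, fun i => DD_comm hU hf (e i) et hp]
  simp only [mul_sub, Finset.sum_sub_distrib, Finset.mul_sum]
  have h7 : ∑ i, 2 * (DD (e i) f p * (β * DD et (DD (e i) f) p))
    = ∑ i, β * (2 * DD (e i) f p * DD et (DD (e i) f) p) :=
    Finset.sum_congr rfl fun i _ => by ring
  have h8 : ∑ i, ∑ j, 2 * (DD (e i) f p * (2 * DD (e j) f p * DD (e i) (DD (e j) f) p))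
    = ∑ i, ∑ j, 2 * DD (e i) f p * (2 * DD (e j) f p * DD (e i) (DD (e j) f) p) :=
    Finset.sum_congr rfl fun i _ => Finset.sum_congr rfl fun j _ => by ring
  rw [h7, h8]
  ring

end

set_option maxHeartbeats 1000000 in
lemma scal_alg {n : ℕ} (hn : 1 ≤ n) {β : ℝ} (hβ : 1 < β) {R : ℝ} (hR : 0 < R) (x a G : Fin n → ℝ)
    (Hs : Fin n → Fin n → ℝ) (X w τ F ft lapF Ft T : ℝ) (hX : X = ∑ i, x i ^ 2) (hXR : X ≤ R ^ 2)
    (hw : w = 1 - X / R ^ 2) (hw0 : 0 < w) (hτ : 0 < τ) (hτT : τ ≤ T) (hF : 0 < F)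
    (hFd : F = ∑ i, a i ^ 2 - β * ft) (heat : ft = ∑ i, (Hs i i + a i ^ 2))
    (hG : ∀ i, (-4 * w * x i / R ^ 2) * F + w ^ 2 * G i = 0)
    (hB : lapF - Ft = 2 * ∑ i, ∑ j, Hs i j ^ 2 - 2 * ∑ i, a i * G i)
    (hL : (8 * X / R ^ 4 - 4 * n * w / R ^ 2) * F + 2 * ∑ i, (-4 * w * x i / R ^ 2) * G i
        + w ^ 2 * lapF ≤ 0)
    (ht : 0 ≤ w ^ 2 * F + τ * w ^ 2 * Ft) :
    τ * w ^ 2 * F ≤ n * β ^ 2 / 2 * (1 + T * (4 * n + 32 + 4 * n * β ^ 2 / (β - 1)) / R ^ 2) := by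
  have hn' : (0 : ℝ) < n := by exact_mod_cast hn
  have hG' : ∀ i, G i = (4 * F / (w * R ^ 2)) * x i := by
    intro i
    have := hG i
    field_simp at this ⊢
    have h2 : w * (G i * R ^ 2 * w - 4 * F * x i) = 0 := by linarith
    rcases mul_eq_zero.1 h2 with h | h
    · exact absurd h hw0.ne'
    · linarith
  set A := ∑ i, a i ^ 2 with hA
  set b := ∑ i, a i * x i with hb
  have hA0 : 0 ≤ A := Finset.sum_nonneg fun i _ => sq_nonneg _
  have hX0 : 0 ≤ X := hX ▸ Finset.sum_nonneg fun i _ => sq_nonneg _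
  have e1 : ∑ i, a i * G i = (4 * F / (w * R ^ 2)) * b := by
    rw [hb, Finset.mul_sum]; exact Finset.sum_congr rfl fun i _ => by rw [hG']; ring
  have e2 : ∑ i, (-4 * w * x i / R ^ 2) * G i = -16 * F * X / R ^ 4 := by
    rw [hX, Finset.mul_sum, Finset.sum_div]
    refine Finset.sum_congr rfl fun i _ => ?_
    rw [hG']; field_simp; ring
  have hcs : b ^ 2 ≤ A * R ^ 2 := by
    have := Finset.sum_mul_sq_le_sq_mul_sq Finset.univ a x
    rw [← hX] at this
    exact this.trans (mul_le_mul_of_nonneg_left hXR hA0)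
  have hS : (F + (β - 1) * A) ^ 2 / (n * β ^ 2) ≤ ∑ i, ∑ j, Hs i j ^ 2 := by
    have h1 : ∑ i, Hs i i ^ 2 ≤ ∑ i, ∑ j, Hs i j ^ 2 :=
      Finset.sum_le_sum fun i _ =>
        Finset.single_le_sum (f := fun j => Hs i j ^ 2) (fun j _ => sq_nonneg _) (Finset.mem_univ i)
    have h2 : (∑ i, Hs i i) ^ 2 ≤ n * ∑ i, Hs i i ^ 2 := by
      simpa using sq_sum_le_card_mul_sum_sq (s := Finset.univ) (f := fun i => Hs i i)
    have h3 : F + (β - 1) * A = - β * ∑ i, Hs i i := by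
      rw [hFd, heat, Finset.sum_add_distrib]; ring
    rw [h3, div_le_iff₀ (by positivity)]
    have h4 : (0:ℝ) ≤ β ^ 2 := by positivity
    calc (-β * ∑ i, Hs i i) ^ 2 = β ^ 2 * (∑ i, Hs i i) ^ 2 := by ring
      _ ≤ β ^ 2 * (n * ∑ i, Hs i i ^ 2) := by gcongr
      _ ≤ β ^ 2 * (n * ∑ i, ∑ j, Hs i j ^ 2) := by gcongr
      _ = _ := by ring
  set S := ∑ i, ∑ j, Hs i j ^ 2
  have hβ0 : 0 < β - 1 := by linarith
  rw [e1] at hB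
  rw [e2] at hL
  have hw1 : w ≤ 1 := by rw [hw]; have : 0 ≤ X / R ^ 2 := by positivity
                         linarith
  have hXr : X / R ^ 4 ≤ 1 / R ^ 2 := by
    rw [div_le_div_iff₀ (by positivity) (by positivity)]
    nlinarith [pow_pos hR 2]
  -- main inequality
  have hFt : -(w ^ 2 * F / τ) ≤ w ^ 2 * Ft := by
    rw [← neg_div, div_le_iff₀ hτ]; nlinarith
  have hm : (8 * X / R ^ 4 - 4 * n * w / R ^ 2) * F - 32 * F * X / R ^ 4
      + w ^ 2 * (2 * S) - 8 * F * w / R ^ 2 * b - w ^ 2 * F / τ ≤ 0 := by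
    have e3 : w ^ 2 * lapF = w ^ 2 * Ft + w ^ 2 * (2 * S) - 8 * F * w / R ^ 2 * b := by
      have : lapF = Ft + 2 * S - 2 * (4 * F / (w * R ^ 2) * b) := by linarith
      rw [this]; field_simp; ring
    rw [e3] at hL
    have e4 : 2 * (-16 * F * X / R ^ 4) = - (32 * F * X / R ^ 4) := by ring
    linarith
  have hS2 : F * (F + 2 * (β - 1) * A) / (n * β ^ 2) ≤ S := by
    refine le_trans ?_ hS
    have h1 : F * (F + 2 * (β - 1) * A) ≤ (F + (β - 1) * A) ^ 2 := by
      have h2 : (F + (β - 1) * A) ^ 2 = F * (F + 2 * (β - 1) * A) + ((β - 1) * A) ^ 2 := by ring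
      rw [h2]
      exact le_add_of_nonneg_right (sq_nonneg _)
    exact div_le_div_of_nonneg_right h1 (by positivity)
  have hm2 : 2 * w ^ 2 * ((F + 2 * (β - 1) * A) / (n * β ^ 2))
      ≤ 4 * n / R ^ 2 + 32 / R ^ 2 + 8 * w / R ^ 2 * b + w ^ 2 / τ := by
    have h1 : F * (2 * w ^ 2 * ((F + 2 * (β - 1) * A) / (n * β ^ 2))) ≤ w ^ 2 * (2 * S) := by
      have := mul_le_mul_of_nonneg_left hS2 (by positivity : 0 ≤ 2 * w ^ 2)
      calc _ = 2 * w ^ 2 * (F * (F + 2 * (β - 1) * A) / (n * β ^ 2)) := by ring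
        _ ≤ _ := this
        _ = _ := by ring
    have h2 : 4 * n * w / R ^ 2 ≤ 4 * n / R ^ 2 := by
      exact div_le_div_of_nonneg_right (mul_le_of_le_one_right (by positivity) hw1) (by positivity)
    have h3 : 0 ≤ X / R ^ 4 := by positivity
    refine le_of_mul_le_mul_left ?_ hF
    have h4 := mul_le_mul_of_nonneg_left h2 hF.le
    have h5 := mul_le_mul_of_nonneg_left hXr hF.le
    have h6 := mul_nonneg hF.le h3
    have r1 : (8 * X / R ^ 4 - 4 * n * w / R ^ 2) * F - 32 * F * X / R ^ 4
      + w ^ 2 * (2 * S) - 8 * F * w / R ^ 2 * b - w ^ 2 * F / τ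
      = 8 * (F * (X / R ^ 4)) - F * (4 * n * w / R ^ 2) - 32 * (F * (X / R ^ 4))
      + w ^ 2 * (2 * S) - F * (8 * w / R ^ 2 * b) - F * (w ^ 2 / τ) := by ring
    rw [r1] at hm
    have r2 : F * (32 / R ^ 2) = 32 * (F * (1 / R ^ 2)) := by ring
    rw [mul_add, mul_add, mul_add, r2]
    linarith
  have hyoung : 8 * w / R ^ 2 * b ≤ 2 * w ^ 2 * (2 * (β - 1) * A / (n * β ^ 2))
      + 4 * n * β ^ 2 / ((β - 1) * R ^ 2) := by
    have h1 : 2 * w ^ 2 * (2 * (β - 1) * (b ^ 2 / R ^ 2) / (n * β ^ 2))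
       ≤ 2 * w ^ 2 * (2 * (β - 1) * A / (n * β ^ 2)) := by
      have : b ^ 2 / R ^ 2 ≤ A := by rw [div_le_iff₀ (by positivity)]; exact hcs
      gcongr
    refine le_trans ?_ (add_le_add_left h1 _)
    have hβp : 0 < β := by linarith
    have r : 2 * w ^ 2 * (2 * (β - 1) * (b ^ 2 / R ^ 2) / (n * β ^ 2))
        + 4 * n * β ^ 2 / ((β - 1) * R ^ 2) - 8 * w / R ^ 2 * b
        = 4 / (R ^ 2 * (β - 1) * n * β ^ 2) * (w * b * (β - 1) - n * β ^ 2) ^ 2 := by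
      field_simp; ring
    have : 0 ≤ 4 / (R ^ 2 * (β - 1) * n * β ^ 2) * (w * b * (β - 1) - n * β ^ 2) ^ 2 := by positivity
    linarith
  have hm3 : 2 * w ^ 2 * (F / (n * β ^ 2)) ≤
      (4 * n + 32 + 4 * n * β ^ 2 / (β - 1)) / R ^ 2 + w ^ 2 / τ := by
    have r1 : 2 * w ^ 2 * ((F + 2 * (β - 1) * A) / (n * β ^ 2))
      = 2 * w ^ 2 * (F / (n * β ^ 2)) + 2 * w ^ 2 * (2 * (β - 1) * A / (n * β ^ 2)) := by ring
    have r2 : (4 * n + 32 + 4 * n * β ^ 2 / (β - 1)) / R ^ 2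
      = 4 * n / R ^ 2 + 32 / R ^ 2 + 4 * n * β ^ 2 / ((β - 1) * R ^ 2) := by
      field_simp
    rw [r2]; linarith
  set c := (4 * n + 32 + 4 * n * β ^ 2 / (β - 1)) with hc
  have hc0 : 0 ≤ c := by positivity
  have h9 : τ * (2 * w ^ 2 * (F / (n * β ^ 2))) ≤ 1 + T * c / R ^ 2 := by
    calc _ ≤ τ * (c / R ^ 2 + w ^ 2 / τ) := mul_le_mul_of_nonneg_left hm3 hτ.le
      _ = w ^ 2 + τ * (c / R ^ 2) := by field_simp; ring
      _ ≤ 1 + T * (c / R ^ 2) := by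
        gcongr
        nlinarith
      _ = _ := by ring
  have hβp : 0 < β := by linarith
  calc τ * w ^ 2 * F = n * β ^ 2 / 2 * (τ * (2 * w ^ 2 * (F / (n * β ^ 2)))) := by field_simp
    _ ≤ _ := mul_le_mul_of_nonneg_left h9 (by positivity)

section
variable {n : ℕ}

noncomputable def ee (i : Fin n) : EuclideanSpace ℝ (Fin n) × ℝ := (EuclideanSpace.single i 1, 0)
noncomputable def etm : EuclideanSpace ℝ (Fin n) × ℝ := (0, 1)

noncomputable def WW (R : ℝ) : EuclideanSpace ℝ (Fin n) × ℝ → ℝ := fun p => 1 - ‖p.1‖ ^ 2 / R ^ 2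

lemma WW_smooth (R : ℝ) : ContDiff ℝ ∞ (WW (n := n) R) := by
  unfold WW
  exact contDiff_const.sub (((contDiff_fst).norm_sq ℝ).div_const _)

lemma WW_fd (R : ℝ) (q v : EuclideanSpace ℝ (Fin n) × ℝ) :
    DD v (WW R) q = -2 * inner ℝ q.1 v.1 / R ^ 2 := by
  have h : HasFDerivAt (fun p : EuclideanSpace ℝ (Fin n) × ℝ => ‖p.1‖ ^ 2) _ q :=
    (hasFDerivAt_fst (𝕜 := ℝ) (p := q)).norm_sq
  have h2 := (h.mul_const (R ^ 2)⁻¹).const_sub 1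
  have : (WW (n := n) R) = fun p => 1 - ‖p.1‖ ^ 2 * (R ^ 2)⁻¹ := by
    ext p; simp [WW, div_eq_mul_inv]
  unfold DD
  rw [this, h2.fderiv]
  simp
  ring

lemma WW_e (R : ℝ) (q : EuclideanSpace ℝ (Fin n) × ℝ) (i : Fin n) :
    DD (ee i) (WW R) q = -2 * q.1 i / R ^ 2 := by
  rw [WW_fd]; simp [ee, EuclideanSpace.inner_single_right]

lemma WW_t (R : ℝ) (q : EuclideanSpace ℝ (Fin n) × ℝ) :
    DD etm (WW R) q = 0 := by
  rw [WW_fd]; simp [etm]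

lemma snd_fd (δ : ℝ) (q v : EuclideanSpace ℝ (Fin n) × ℝ) :
    DD v (fun p => p.2 - δ) q = v.2 := by
  unfold DD
  rw [((hasFDerivAt_snd (𝕜 := ℝ) (p := q)).sub_const δ).fderiv]; simp

lemma coord_fd (q v : EuclideanSpace ℝ (Fin n) × ℝ) (i : Fin n) :
    DD v (fun p => p.1 i) q = v.1 i := by
  have h : HasFDerivAt (fun p : EuclideanSpace ℝ (Fin n) × ℝ => p.1 i)
     ((EuclideanSpace.proj i : EuclideanSpace ℝ (Fin n) →L[ℝ] ℝ).comp
        (ContinuousLinearMap.fst ℝ _ ℝ)) q :=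
    ((EuclideanSpace.proj i : EuclideanSpace ℝ (Fin n) →L[ℝ] ℝ).comp
        (ContinuousLinearMap.fst ℝ _ ℝ)).hasFDerivAt
  unfold DD
  rw [h.fderiv]; simp

noncomputable def Ph (R δ : ℝ) : EuclideanSpace ℝ (Fin n) × ℝ → ℝ :=
  fun p => (p.2 - δ) * WW R p ^ 2

lemma Ph_smooth (R δ : ℝ) : ContDiff ℝ ∞ (Ph (n := n) R δ) := by
  unfold Ph
  exact (contDiff_snd.sub contDiff_const).mul ((WW_smooth R).pow 2)

lemma WW_diff (R : ℝ) (q : EuclideanSpace ℝ (Fin n) × ℝ) : DifferentiableAt ℝ (WW R) q :=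
  (WW_smooth R).contDiffAt.differentiableAt (by simp)

lemma tm_diff (δ : ℝ) (q : EuclideanSpace ℝ (Fin n) × ℝ) :
    DifferentiableAt ℝ (fun p : EuclideanSpace ℝ (Fin n) × ℝ => p.2 - δ) q :=
  differentiableAt_snd.sub_const δ

lemma Ph_fd (R δ : ℝ) (q v : EuclideanSpace ℝ (Fin n) × ℝ) :
    DD v (Ph R δ) q = v.2 * WW R q ^ 2 + (q.2 - δ) * (2 * WW R q * DD v (WW R) q) := by
  unfold Ph
  rw [DD_mul (h := fun p => WW R p ^ 2) (tm_diff δ q) ((WW_diff R q).pow 2), snd_fd, DD_sq (WW_diff R q)]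

lemma Ph_t (R δ : ℝ) (q : EuclideanSpace ℝ (Fin n) × ℝ) :
    DD etm (Ph R δ) q = WW R q ^ 2 := by
  rw [Ph_fd, WW_t]; simp [etm]

lemma Ph_e (R δ : ℝ) (q : EuclideanSpace ℝ (Fin n) × ℝ) (i : Fin n) :
    DD (ee i) (Ph R δ) q = (q.2 - δ) * ((-4 / R ^ 2) * (WW R q * q.1 i)) := by
  rw [Ph_fd, WW_e]; simp [ee]; left; ring

lemma Ph_ee (R δ : ℝ) (q : EuclideanSpace ℝ (Fin n) × ℝ) (i : Fin n) :
    DD (ee i) (DD (ee i) (Ph R δ)) q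
      = (q.2 - δ) * (8 * q.1 i ^ 2 / R ^ 4 - 4 * WW R q / R ^ 2) := by
  have h : DD (ee i) (Ph R δ) = fun q => (q.2 - δ) * ((-4 / R ^ 2) * (WW R q * q.1 i)) := by
    ext q; exact Ph_e R δ q i
  have hc : DifferentiableAt ℝ (fun p : EuclideanSpace ℝ (Fin n) × ℝ => p.1 i) q := by fun_prop
  rw [h, DD_mul (h := fun q => (-4 / R ^ 2) * (WW R q * q.1 i)) (tm_diff δ q)
    (((WW_diff R q).mul hc).const_mul _), DD_cmul (g := fun q => WW R q * q.1 i)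
      ((WW_diff R q).mul hc), DD_mul (WW_diff R q) hc, snd_fd, coord_fd, WW_e]
  simp [ee]
  left
  ring

lemma left_test {k : ℝ → ℝ} {k' r : ℝ} (hr : 0 < r) (hk : HasDerivAt k k' 0)
    (hm : ∀ s, -r < s → s < 0 → k s ≤ k 0) : 0 ≤ k' := by
  have h1 := hk.hasDerivWithinAt (s := Set.Iio 0)
  rw [hasDerivWithinAt_iff_tendsto_slope' (by simp)] at h1
  refine ge_of_tendsto h1 ?_
  have : Set.Ioo (-r) 0 ∈ nhdsWithin (0:ℝ) (Set.Iio 0) := Ioo_mem_nhdsLT (by linarith)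
  filter_upwards [this] with s hs
  rw [slope_def_field]
  have := hm s hs.1 hs.2
  exact div_nonneg_of_nonpos (by linarith) (by linarith [hs.2])

set_option maxHeartbeats 1000000 in
lemma LY_local (hn : 1 ≤ n) {T : ℝ} {f : EuclideanSpace ℝ (Fin n) × ℝ → ℝ}
    (hf : ContDiffOn ℝ ∞ f {p | 0 < p.2 ∧ p.2 < T})
    (heat : ∀ p : EuclideanSpace ℝ (Fin n) × ℝ, 0 < p.2 ∧ p.2 < T →
      DD etm f p = ∑ i, (DD (ee i) (DD (ee i) f) p + (DD (ee i) f p) ^ 2))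
    {β : ℝ} (hβ : 1 < β) {R δ : ℝ} (hR : 0 < R) (hδ : 0 < δ)
    (p₀ : EuclideanSpace ℝ (Fin n) × ℝ) (h0δ : δ < p₀.2) (h0T : p₀.2 < T) (h0R : ‖p₀.1‖ < R) :
    (p₀.2 - δ) * WW R p₀ ^ 2 * LYF ee etm f β p₀ ≤
      n * β ^ 2 / 2 * (1 + T * (4 * n + 32 + 4 * n * β ^ 2 / (β - 1)) / R ^ 2) := by
  set U : Set (EuclideanSpace ℝ (Fin n) × ℝ) := {p | 0 < p.2 ∧ p.2 < T} with hUdef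
  have hU : IsOpen U := (isOpen_lt continuous_const continuous_snd).inter
    (isOpen_lt continuous_snd continuous_const)
  set F := LYF ee etm f β with hFdef
  have hF : ContDiffOn ℝ ∞ F U := LYF_smooth hU hf _ _ _
  set K : Set (EuclideanSpace ℝ (Fin n) × ℝ) := Metric.closedBall 0 R ×ˢ Set.Icc δ p₀.2 with hK
  have hKc : IsCompact K := (isCompact_closedBall 0 R).prod isCompact_Icc
  have hKU : K ⊆ U := fun p hp => ⟨lt_of_lt_of_le hδ hp.2.1, lt_of_le_of_lt hp.2.2 h0T⟩
  set H : EuclideanSpace ℝ (Fin n) × ℝ → ℝ := fun p => Ph R δ p * F p with hH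
  have hHs : ContDiffOn ℝ ∞ H U := (Ph_smooth R δ).contDiffOn.mul hF
  have hp₀ : p₀ ∈ K := ⟨by simpa using h0R.le, h0δ.le, le_rfl⟩
  obtain ⟨p, hpK, hpm⟩ := hKc.exists_isMaxOn ⟨p₀, hp₀⟩ (hHs.continuousOn.mono hKU)
  have hle : H p₀ ≤ H p := hpm hp₀
  have hβ0 : 0 < β - 1 := by linarith
  have hT : 0 < T := by linarith
  refine le_trans hle ?_
  by_cases hpos : H p ≤ 0
  · refine hpos.trans ?_
    positivity
  push Not at hpos
  have hpU := hKU hpK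
  have hτ0 : 0 ≤ p.2 - δ := by linarith [hpK.2.1]
  have hnorm : ‖p.1‖ ≤ R := by simpa using hpK.1
  have hPhn : 0 ≤ Ph R δ p := mul_nonneg hτ0 (sq_nonneg _)
  have hPh : 0 < Ph R δ p := by
    rcases hPhn.eq_or_lt with h | h
    · simp only [hH] at hpos; rw [← h] at hpos; simp at hpos
    · exact h
  have hFp : 0 < F p := (pos_iff_pos_of_mul_pos hpos).1 hPh
  have hτ : 0 < p.2 - δ := by
    rcases hτ0.eq_or_lt with h | h
    · unfold Ph at hPh; rw [← h] at hPh; simp at hPh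
    · exact h
  have hXR : ‖p.1‖ ^ 2 ≤ R ^ 2 := by gcongr
  have hw0 : 0 < WW R p := by
    have h1 : 0 ≤ WW R p := by
      unfold WW
      rw [sub_nonneg, div_le_one (by positivity)]; exact hXR
    rcases h1.eq_or_lt with h | h
    · unfold Ph at hPh; rw [← h] at hPh; simp at hPh
    · exact h
  have hnlt : ‖p.1‖ < R := by
    rcases hnorm.eq_or_lt with h | h
    · unfold WW at hw0; rw [h, div_self (by positivity)] at hw0; simp at hw0
    · exact h
  have hsp : ∀ i, DD (ee i) H p = 0 ∧ DD (ee i) (DD (ee i) H) p ≤ 0 := by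
    intro i
    apply max_first hU hHs hpU
    have hc : Continuous (fun s : ℝ => ‖(p + s • ee i).1‖) := by fun_prop
    have hev : ∀ᶠ s : ℝ in nhds 0, ‖(p + s • ee i).1‖ < R :=
      hc.continuousAt.eventually_lt_const (by simpa using hnlt)
    filter_upwards [hev] with s hs
    have : p + s • ee i ∈ K := by
      refine ⟨by simpa using hs.le, ?_⟩
      have : (p + s • ee i).2 = p.2 := by simp [ee]
      rw [this]; exact hpK.2
    simpa using hpm this
  have htm : 0 ≤ DD etm H p := by
    have hd := DD_line (sm_diff hU hHs hpU) etm 0 (q := p) (by simp)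
    refine left_test hτ hd ?_
    intro s hs1 hs2
    have : p + s • etm ∈ K := by
      have h1 : (p + s • etm).1 = p.1 := by simp [etm]
      have h2 : (p + s • etm).2 = p.2 + s := by simp [etm]
      refine ⟨by rw [h1]; exact hpK.1, ?_⟩
      rw [h2]; exact ⟨by linarith, by linarith [hpK.2.2]⟩
    simpa using hpm this
  have dP : ∀ q, DifferentiableAt ℝ (Ph (n := n) R δ) q := fun q =>
    (Ph_smooth R δ).contDiffAt.differentiableAt (by simp)
  have hDH : ∀ v, ∀ q ∈ U, DD v H q = DD v (Ph R δ) q * F q + Ph R δ q * DD v F q :=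
    fun v q hq => DD_mul (dP q) (sm_diff hU hF hq) v
  have dP2 : ∀ v q, DifferentiableAt ℝ (DD v (Ph (n := n) R δ)) q := fun v q =>
    sm_diff isOpen_univ (DD_smooth isOpen_univ (Ph_smooth R δ).contDiffOn v) (Set.mem_univ q)
  have dF : DifferentiableAt ℝ F p := sm_diff hU hF hpU
  have dF2 : ∀ v, DifferentiableAt ℝ (DD v F) p := fun v => sm_diff hU (DD_smooth hU hF v) hpU
  have hDDH : ∀ v, DD v (DD v H) p = DD v (DD v (Ph R δ)) p * F p
      + 2 * (DD v (Ph R δ) p * DD v F p) + Ph R δ p * DD v (DD v F) p := by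
    intro v
    rw [DD_congr hU (hDH v) v hpU, DD_add, DD_mul (dP2 v p) dF, DD_mul (dP p) (dF2 v)]
    · ring
    · exact (dP2 v p).mul dF
    · exact (dP p).mul (dF2 v)
  have hX : ‖p.1‖ ^ 2 = ∑ i, p.1 i ^ 2 := by
    rw [EuclideanSpace.norm_sq_eq]; simp
  have hfin := scal_alg hn hβ hR (fun i => p.1 i) (fun i => DD (ee i) f p) (fun i => DD (ee i) F p)
    (fun i j => DD (ee i) (DD (ee j) f) p) (‖p.1‖ ^ 2) (WW R p) (p.2 - δ) (F p) (DD etm f p)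
    (∑ i, DD (ee i) (DD (ee i) F) p) (DD etm F p) T hX hXR rfl hw0 hτ (by linarith [hpU.2]) hFp
    rfl (heat p hpU) ?_ (bochner hU hf ee etm β heat hpU) ?_ ?_
  · exact hfin
  · intro i
    have := (hsp i).1
    rw [hDH _ p hpU, Ph_e] at this
    unfold Ph at this
    have h2 : (p.2 - δ) * ((-4 * WW R p * p.1 i / R ^ 2) * F p + WW R p ^ 2 * DD (ee i) F p) = 0 := by
      rw [← this]; ring
    exact (mul_eq_zero.1 h2).resolve_left hτ.ne'
  · have h1 : ∑ i, DD (ee i) (DD (ee i) H) p ≤ 0 := Finset.sum_nonpos fun i _ => (hsp i).2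
    have h2 : ∑ i, DD (ee i) (DD (ee i) H) p = (p.2 - δ) * ((8 * ‖p.1‖ ^ 2 / R ^ 4 - 4 * n * WW R p / R ^ 2) * F p
        + 2 * ∑ i, (-4 * WW R p * p.1 i / R ^ 2) * DD (ee i) F p
        + WW R p ^ 2 * ∑ i, DD (ee i) (DD (ee i) F) p) := by
      have h3 : 8 * ‖p.1‖ ^ 2 / R ^ 4 - 4 * n * WW R p / R ^ 2
         = ∑ i, (8 * p.1 i ^ 2 / R ^ 4 - 4 * WW R p / R ^ 2) := by
        rw [Finset.sum_sub_distrib, hX, Finset.mul_sum, Finset.sum_div]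
        simp; ring
      rw [h3]
      simp only [Finset.mul_sum, Finset.sum_mul, ← Finset.sum_add_distrib]
      refine Finset.sum_congr rfl fun i _ => ?_
      rw [hDDH, Ph_e, Ph_ee]
      unfold Ph
      ring
    rw [h2] at h1
    exact nonpos_of_mul_nonpos_right h1 hτ
  · rw [hDH _ p hpU, Ph_t] at htm
    unfold Ph at htm
    exact htm

lemma LY (hn : 1 ≤ n) {T : ℝ} {f : EuclideanSpace ℝ (Fin n) × ℝ → ℝ}
    (hf : ContDiffOn ℝ ∞ f {p | 0 < p.2 ∧ p.2 < T})
    (heat : ∀ p : EuclideanSpace ℝ (Fin n) × ℝ, 0 < p.2 ∧ p.2 < T →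
      DD etm f p = ∑ i, (DD (ee i) (DD (ee i) f) p + (DD (ee i) f p) ^ 2))
    {β : ℝ} (hβ : 1 < β)
    (p : EuclideanSpace ℝ (Fin n) × ℝ) (h0 : 0 < p.2) (h0T : p.2 < T) :
    p.2 * LYF ee etm f β p ≤ n * β ^ 2 / 2 := by
  have hi : Filter.Tendsto (fun R : ℝ => R⁻¹) Filter.atTop (nhds 0) := tendsto_inv_atTop_zero
  have hi2 : Filter.Tendsto (fun R : ℝ => (R⁻¹) ^ 2) Filter.atTop (nhds 0) := by
    simpa using hi.pow 2
  set c := T * (4 * n + 32 + 4 * n * β ^ 2 / (β - 1))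
  have hl : Filter.Tendsto (fun R : ℝ => (p.2 - R⁻¹) * (1 - ‖p.1‖ ^ 2 * (R⁻¹) ^ 2) ^ 2 * LYF ee etm f β p)
      Filter.atTop (nhds ((p.2 - 0) * (1 - ‖p.1‖ ^ 2 * 0) ^ 2 * LYF ee etm f β p)) :=
    (((tendsto_const_nhds.sub hi).mul ((tendsto_const_nhds.sub
      (tendsto_const_nhds.mul hi2)).pow 2)).mul_const _)
  have hr : Filter.Tendsto (fun R : ℝ => n * β ^ 2 / 2 * (1 + c * (R⁻¹) ^ 2))
      Filter.atTop (nhds (n * β ^ 2 / 2 * (1 + c * 0))) :=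
    tendsto_const_nhds.mul (tendsto_const_nhds.add (tendsto_const_nhds.mul hi2))
  have hev := le_of_tendsto_of_tendsto hl hr ?_
  · simpa using hev
  filter_upwards [Filter.eventually_gt_atTop 0, Filter.eventually_gt_atTop ‖p.1‖,
    hi.eventually_lt_const h0] with R h1 h2 h3
  have := LY_local hn hf heat hβ h1 (inv_pos.2 h1) p h3 h0T h2
  unfold WW at this
  simpa [div_eq_mul_inv, c] using this

end

lemma log_heat {n : ℕ} {T : ℝ} {u : EuclideanSpace ℝ (Fin n) → ℝ → ℝ}
    (hu : ContDiff ℝ (⊤ : ℕ∞) (fun p : EuclideanSpace ℝ (Fin n) × ℝ => u p.1 p.2))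
    (hpos : ∀ x, ∀ t ∈ Set.Ioc 0 T, 0 < u x t)
    (hheat : ∀ x, ∀ t ∈ Set.Ioc 0 T,
            deriv (fun s => u x s) t = laplacian (fun y => u y t) x) :
    ∀ p : EuclideanSpace ℝ (Fin n) × ℝ, 0 < p.2 ∧ p.2 < T →
      DD etm (fun p => Real.log (u p.1 p.2)) p = ∑ i, (DD (ee i) (DD (ee i)
        (fun p => Real.log (u p.1 p.2))) p + (DD (ee i) (fun p => Real.log (u p.1 p.2)) p) ^ 2) := by
  set U : Set (EuclideanSpace ℝ (Fin n) × ℝ) := {p | 0 < p.2 ∧ p.2 < T} with hUdef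
  have hU : IsOpen U := (isOpen_lt continuous_const continuous_snd).inter
    (isOpen_lt continuous_snd continuous_const)
  set g : EuclideanSpace ℝ (Fin n) × ℝ → ℝ := fun p => u p.1 p.2 with hg
  have hgU : ∀ p ∈ U, 0 < g p := fun p hp => hpos _ _ ⟨hp.1, hp.2.le⟩
  have hgs : ContDiffOn ℝ ∞ g Set.univ := hu.contDiffOn
  have dg : ∀ q, DifferentiableAt ℝ g q := fun q => sm_diff isOpen_univ hgs (Set.mem_univ q)
  have dg2 : ∀ v q, DifferentiableAt ℝ (DD v g) q := fun v q =>
    sm_diff isOpen_univ (DD_smooth isOpen_univ hgs v) (Set.mem_univ q)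
  have hlog : ∀ v, ∀ q ∈ U, DD v (fun p => Real.log (g p)) q = (g q)⁻¹ * DD v g q := by
    intro v q hq
    unfold DD
    rw [((dg q).hasFDerivAt.log (hgU q hq).ne').fderiv]
    simp
  have hb : ∀ q ∈ U, DD etm g q = ∑ i, DD (ee i) (DD (ee i) g) q := by
    intro q hq
    have h1 := hheat q.1 q.2 ⟨hq.1, hq.2.le⟩
    have h2 : HasDerivAt (fun s => u q.1 s) (DD etm g q) q.2 := by
      have h3 : HasDerivAt (fun s : ℝ => (q.1, s)) (etm : EuclideanSpace ℝ (Fin n) × ℝ) q.2 :=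
        (hasDerivAt_const q.2 q.1).prodMk (hasDerivAt_id q.2)
      exact ((dg q).hasFDerivAt).comp_hasDerivAt q.2 h3
    have key : ∀ (k : EuclideanSpace ℝ (Fin n) × ℝ → ℝ), (∀ q, DifferentiableAt ℝ k q) →
        ∀ (t : ℝ) (y v : EuclideanSpace ℝ (Fin n)),
          fderiv ℝ (fun y => k (y, t)) y v = fderiv ℝ k (y, t) (v, 0) := by
      intro k hk t y v
      have h3 : HasFDerivAt (fun y : EuclideanSpace ℝ (Fin n) => (y, t))
        (ContinuousLinearMap.inl ℝ (EuclideanSpace ℝ (Fin n)) ℝ) y := hasFDerivAt_prodMk_left y t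
      have h4 : HasFDerivAt (fun y => k (y, t)) _ y := (hk (y, t)).hasFDerivAt.comp y h3
      rw [h4.fderiv]; simp
    rw [← h2.deriv, h1]
    unfold laplacian
    refine Finset.sum_congr rfl fun i _ => ?_
    have h5 : (fun y => (fderiv ℝ (fun y => u y q.2) y) (EuclideanSpace.single i 1))
      = fun y => DD (ee i) g (y, q.2) := by
      ext y
      exact key g dg q.2 y _
    rw [h5, key (DD (ee i) g) (dg2 _)]
    rfl
  intro p hp
  rw [hlog _ p hp, hb p hp, Finset.mul_sum]
  refine Finset.sum_congr rfl fun i _ => ?_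
  have hi : ∀ v, DD v (fun q => (g q)⁻¹) p = - (DD v g p) / (g p) ^ 2 := by
    intro v
    have h := ((hasDerivAt_inv (hgU p hp).ne').comp_hasFDerivAt p (dg p).hasFDerivAt)
    have h2 : DD v (fun q => (g q)⁻¹) p = _ := congrArg (fun L => L v) h.fderiv
    rw [h2]; simp [DD]; ring
  have hdi : DifferentiableAt ℝ (fun q => (g q)⁻¹) p := (dg p).fun_inv (hgU p hp).ne'
  rw [DD_congr hU (hlog (ee i)) (ee i) hp, DD_mul hdi (dg2 _ p), hlog _ p hp, hi]
  have := (hgU p hp).ne'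
  field_simp
  ring

theorem harnack_inequality_flat (n : ℕ) (hn : 1 ≤ n) :
    ∃ C' : ℝ, 0 < C' ∧
      ∀ T : ℝ, 0 < T →
        ∀ u : EuclideanSpace ℝ (Fin n) → ℝ → ℝ,
          ContDiff ℝ (⊤ : ℕ∞) (fun p : EuclideanSpace ℝ (Fin n) × ℝ => u p.1 p.2) →
          (∀ x, ∀ t ∈ Set.Ioc 0 T, 0 < u x t) →
          (∀ x, ∀ t ∈ Set.Ioc 0 T,
            deriv (fun s => u x s) t = laplacian (fun y => u y t) x) →
          ∀ β : ℝ, 1 < β →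
            ∀ x₁ x₂ : EuclideanSpace ℝ (Fin n), ∀ t₁ t₂ : ℝ,
              0 < t₁ → t₁ < t₂ → t₂ ≤ T →
                u x₂ t₂ ≥ u x₁ t₁ * (t₂ / t₁) ^ (-(C' * β)) *
                  Real.exp (-(β * ‖x₂ - x₁‖ ^ 2 / (4 * (t₂ - t₁)))) := by
  have hn' : (0 : ℝ) < n := by exact_mod_cast hn
  refine ⟨n / 2, by positivity, ?_⟩
  intro T hT u hu hpos hheat β hβ x₁ x₂ t₁ t₂ ht₁ ht ht₂
  have heat := log_heat hu hpos hheat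
  set f : EuclideanSpace ℝ (Fin n) × ℝ → ℝ := fun p => Real.log (u p.1 p.2) with hf
  have hfs : ContDiffOn ℝ ∞ f {p | 0 < p.2 ∧ p.2 < T} :=
    hu.contDiffOn.log fun p hp => (hpos _ _ ⟨hp.1, hp.2.le⟩).ne'
  have hU : IsOpen {p : EuclideanSpace ℝ (Fin n) × ℝ | 0 < p.2 ∧ p.2 < T} :=
    (isOpen_lt continuous_const continuous_snd).inter
    (isOpen_lt continuous_snd continuous_const)
  have hh : 0 < t₂ - t₁ := by linarith
  set v : EuclideanSpace ℝ (Fin n) := (t₂ - t₁)⁻¹ • (x₂ - x₁) with hv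
  set γ : ℝ → EuclideanSpace ℝ (Fin n) × ℝ := fun s => (x₁ + (s - t₁) • v, s) with hγ
  set c : ℝ := β / 4 * ‖v‖ ^ 2 with hc
  set k : ℝ → ℝ := fun s => f (γ s) + n / 2 * β * Real.log s + c * s with hk
  have hβ0 : 0 < β := by linarith
  have hγc : Continuous γ := by fun_prop
  have hkc : ContinuousOn k (Set.Icc t₁ t₂) := by
    have h1 : ContinuousOn (fun s => f (γ s)) (Set.Icc t₁ t₂) :=
      ContinuousOn.log (hu.continuous.comp hγc).continuousOn
        fun s hs => (hpos _ _ ⟨lt_of_lt_of_le ht₁ hs.1, hs.2.trans ht₂⟩).ne'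
    have h2 : ContinuousOn Real.log (Set.Icc t₁ t₂) :=
      Real.continuousOn_log.mono fun s hs => (lt_of_lt_of_le ht₁ hs.1).ne'
    exact (h1.add (continuousOn_const.mul h2)).add (by fun_prop)
  have hmono : MonotoneOn k (Set.Icc t₁ t₂) := by
    have hder : ∀ s ∈ Set.Ioo t₁ t₂, ∃ k', HasDerivAt k k' s ∧ 0 ≤ k' := by
      intro s hs
      have hs0 : 0 < s := ht₁.trans hs.1
      have hsU : 0 < (γ s).2 ∧ (γ s).2 < T := ⟨hs0, lt_of_lt_of_le hs.2 ht₂⟩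
      have hfd := (sm_diff hU hfs hsU).hasFDerivAt
      have hγd : HasDerivAt γ (v, 1) s := by
        have h1 : HasDerivAt (fun s : ℝ => x₁ + (s - t₁) • v) v s := by
          simpa using (((hasDerivAt_id s).sub_const t₁).smul_const v).const_add x₁
        exact h1.prodMk (hasDerivAt_id s)
      have h2 := hfd.comp_hasDerivAt s hγd
      refine ⟨_, (h2.add ((Real.hasDerivAt_log hs0.ne').const_mul _)).add
        ((hasDerivAt_id s).const_mul c), ?_⟩
      have hdec : ((v, 1) : EuclideanSpace ℝ (Fin n) × ℝ) = etm + ∑ i, v i • ee i := by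
        apply Prod.ext
        · simp only [Prod.fst_add, Prod.fst_sum, Prod.smul_fst, etm, ee, zero_add]
          ext j
          simp [Finset.sum_apply, Pi.single_apply]
        · simp [etm, ee, Prod.snd_sum]
      have hval : fderiv ℝ f (γ s) (v, 1) = DD etm f (γ s) + ∑ i, v i * DD (ee i) f (γ s) := by
        rw [hdec, map_add, map_sum]
        simp [DD]
      have hLY := LY hn hfs heat hβ (γ s) hsU.1 hsU.2
      unfold LYF at hLY
      rw [hval]
      set A := ∑ i, DD (ee i) f (γ s) ^ 2
      set d := DD etm f (γ s)
      have hs2 : (γ s).2 = s := rfl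
      rw [hs2] at hLY
      have hnv : ‖v‖ ^ 2 = ∑ i, v i ^ 2 := by rw [EuclideanSpace.norm_sq_eq]; simp
      have hsq : 0 ≤ A / β + ∑ i, v i * DD (ee i) f (γ s) + c := by
        have : A / β + ∑ i, v i * DD (ee i) f (γ s) + c
          = ∑ i, β * (DD (ee i) f (γ s) / β + v i / 2) ^ 2 := by
          rw [hc, hnv, Finset.mul_sum, Finset.sum_div, ← Finset.sum_add_distrib,
            ← Finset.sum_add_distrib]
          refine Finset.sum_congr rfl fun i _ => ?_
          field_simp
          ring
        rw [this]
        exact Finset.sum_nonneg fun i _ => by positivity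
      have hd : A / β ≤ d + n / 2 * β * s⁻¹ := by
        rw [div_le_iff₀ hβ0]
        have h5 : A - β * d ≤ n * β ^ 2 / 2 / s := by
          rw [le_div_iff₀ hs0]; linarith
        have h6 : (d + n / 2 * β * s⁻¹) * β = β * d + n * β ^ 2 / 2 / s := by
          field_simp
        linarith
      simp only [mul_one]
      linarith
    refine monotoneOn_of_deriv_nonneg (convex_Icc _ _) hkc ?_ ?_
    · rw [interior_Icc]
      intro s hs
      obtain ⟨k', h1, _⟩ := hder s hs
      exact h1.differentiableAt.differentiableWithinAt
    · rw [interior_Icc]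
      intro s hs
      obtain ⟨k', h1, h2⟩ := hder s hs
      rw [h1.deriv]; exact h2
  have hfin := hmono (Set.left_mem_Icc.2 ht.le) (Set.right_mem_Icc.2 ht.le) ht.le
  have hγ1 : γ t₁ = (x₁, t₁) := by simp [hγ]
  have hγ2 : γ t₂ = (x₂, t₂) := by
    simp only [hγ, hv]
    rw [smul_smul, mul_inv_cancel₀ hh.ne']; simp
  simp only [hk, hγ1, hγ2, hf] at hfin
  have ht₂0 : 0 < t₂ := ht₁.trans ht
  have hcv : c * (t₂ - t₁) = β * ‖x₂ - x₁‖ ^ 2 / (4 * (t₂ - t₁)) := by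
    rw [hc, hv, norm_smul, Real.norm_of_nonneg (by positivity)]
    field_simp
  have hu1 : 0 < u x₁ t₁ := hpos _ _ ⟨ht₁, by linarith⟩
  have hu2 : 0 < u x₂ t₂ := hpos _ _ ⟨ht₂0, ht₂⟩
  rw [ge_iff_le, ← Real.log_le_log_iff (by positivity) hu2, Real.log_mul (by positivity) (by positivity),
    Real.log_mul (by positivity) (by positivity), Real.log_exp, Real.log_rpow (by positivity),
    Real.log_div ht₂0.ne' ht₁.ne', ← hcv]
  linarith
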